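/- If every variable of a k-CNF formula F occurs in at most 2^k/(e·k) clauses, then F is satisfiable. -/

import Mathlib

/-!
Toss a fair coin for every variable, and let `A C` be the event that the clause `C` is violated, so
that `ℙ (A C) = 2⁻ᵏ`. Since `A C` is independent of the clauses that share no variable with `C`, the
Lovász local lemma applies. It is used with the weights `x C = 1 - exp (-e * ℙ (A C))`: these turn
the product in its hypothesis into the exponential of a sum, and the hypothesis then reads
`e * ∑ D, ℙ (A D) ≤ 1`, where `D` runs over the clauses sharing a variable with `C`. There are at
most `k * (2 ^ k / (e * k)) = 2 ^ k / e` of these.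
-/

open MeasureTheory ProbabilityTheory

namespace LocalLemma

section Events

variable {Ω ι : Type*} {mΩ : MeasurableSpace Ω} {μ : Measure Ω} {A : ι → Set Ω}

lemma measureReal_biInter_compl_insert [IsFiniteMeasure μ] [DecidableEq ι] {i : ι}
    (hA : MeasurableSet (A i)) (S : Finset ι) :
    μ.real (⋂ j ∈ insert i S, (A j)ᶜ) =
      μ.real (⋂ j ∈ S, (A j)ᶜ) - μ.real (A i ∩ ⋂ j ∈ S, (A j)ᶜ) := by
  rw [Finset.set_biInter_insert, Set.inter_comm, ← Set.sdiff_eq, Set.inter_comm (A i),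
    eq_sub_iff_add_eq, measureReal_sdiff_add_inter hA]

lemma prod_one_sub_mul_measureReal_biInter_compl_le [IsFiniteMeasure μ] [DecidableEq ι] {x : ι → ℝ}
    {S T : Finset ι} (hA : ∀ i ∈ T, MeasurableSet (A i)) (hx : ∀ i ∈ T, x i ≤ 1)
    (h : ∀ U ⊆ T, ∀ i ∈ T, i ∉ U →
      μ.real (A i ∩ ⋂ j ∈ U ∪ S, (A j)ᶜ) ≤ x i * μ.real (⋂ j ∈ U ∪ S, (A j)ᶜ)) :
    (∏ i ∈ T, (1 - x i)) * μ.real (⋂ j ∈ S, (A j)ᶜ) ≤ μ.real (⋂ j ∈ T ∪ S, (A j)ᶜ) := by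
  induction T using Finset.induction_on with
  | empty => simp
  | insert i T hi ih =>
    have ih' := ih (fun j hj ↦ hA j (Finset.mem_insert_of_mem hj))
      (fun j hj ↦ hx j (Finset.mem_insert_of_mem hj)) fun U hU j hj ↦
        h U (hU.trans (Finset.subset_insert i T)) j (Finset.mem_insert_of_mem hj)
    have hiT := h T (Finset.subset_insert i T) i (Finset.mem_insert_self i T) hi
    have hxi : 0 ≤ 1 - x i := sub_nonneg.2 (hx i (Finset.mem_insert_self i T))
    rw [Finset.prod_insert hi, Finset.insert_union,
      measureReal_biInter_compl_insert (hA i (Finset.mem_insert_self i T))]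
    calc (1 - x i) * (∏ j ∈ T, (1 - x j)) * μ.real (⋂ j ∈ S, (A j)ᶜ)
        = (1 - x i) * ((∏ j ∈ T, (1 - x j)) * μ.real (⋂ j ∈ S, (A j)ᶜ)) := mul_assoc ..
      _ ≤ (1 - x i) * μ.real (⋂ j ∈ T ∪ S, (A j)ᶜ) := mul_le_mul_of_nonneg_left ih' hxi
      _ ≤ _ := by linarith

/-- The hypothesis of the lopsided Lovász local lemma: given that any events outside `Γ i ∪ {i}` are
avoided, `A i` has conditional probability at most `x i * ∏ j ∈ Γ i, (1 - x j)`. It is stated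
without division, so that conditioning on a null event imposes no condition. -/
def LopsidedBound (μ : Measure Ω) (A : ι → Set Ω) (Γ : ι → Finset ι) (x : ι → ℝ) : Prop :=
  ∀ i S, i ∉ S → Disjoint S (Γ i) →
    μ.real (A i ∩ ⋂ j ∈ S, (A j)ᶜ) ≤
      x i * (∏ j ∈ Γ i, (1 - x j)) * μ.real (⋂ j ∈ S, (A j)ᶜ)

namespace LopsidedBound

variable [IsFiniteMeasure μ] {Γ : ι → Finset ι} {x : ι → ℝ}

lemma measureReal_inter_biInter_compl_le (h : LopsidedBound μ A Γ x)
    (hA : ∀ i, MeasurableSet (A i)) (hx₀ : ∀ i, 0 ≤ x i) (hx₁ : ∀ i, x i ≤ 1)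
    (S : Finset ι) {i : ι} (hi : i ∉ S) :
    μ.real (A i ∩ ⋂ j ∈ S, (A j)ᶜ) ≤ x i * μ.real (⋂ j ∈ S, (A j)ᶜ) := by
  classical
  induction S using Finset.strongInduction generalizing i with
  | H S ih =>
    have avoid_near : (∏ j ∈ S ∩ Γ i, (1 - x j)) * μ.real (⋂ j ∈ S \ Γ i, (A j)ᶜ) ≤
        μ.real (⋂ j ∈ S, (A j)ᶜ) := by
      conv_rhs => rw [← Finset.sdiff_union_inter S (Γ i), Finset.union_comm]
      refine prod_one_sub_mul_measureReal_biInter_compl_le (fun j _ ↦ hA j) (fun j _ ↦ hx₁ j)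
        fun U hU j hj hjU ↦ ?_
      have hjU' : j ∉ U ∪ S \ Γ i := by grind
      have hss : U ∪ S \ Γ i ⊂ S :=
        (Finset.ssubset_iff_of_subset (by grind)).2 ⟨j, by grind, hjU'⟩
      exact ih _ hss hjU'
    have prod_le : ∏ j ∈ Γ i, (1 - x j) ≤ ∏ j ∈ S ∩ Γ i, (1 - x j) :=
      Finset.prod_le_prod_of_subset_of_le_one Finset.inter_subset_right
        (fun j _ ↦ sub_nonneg.2 (hx₁ j)) (fun j _ _ ↦ sub_le_self 1 (hx₀ j))
    calc μ.real (A i ∩ ⋂ j ∈ S, (A j)ᶜ)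
        ≤ μ.real (A i ∩ ⋂ j ∈ S \ Γ i, (A j)ᶜ) :=
          measureReal_mono <| Set.inter_subset_inter_right _ <|
            Set.biInter_subset_biInter_left Finset.sdiff_subset
      _ ≤ x i * (∏ j ∈ Γ i, (1 - x j)) * μ.real (⋂ j ∈ S \ Γ i, (A j)ᶜ) :=
          h i _ (by grind) Finset.sdiff_disjoint
      _ ≤ x i * ((∏ j ∈ S ∩ Γ i, (1 - x j)) * μ.real (⋂ j ∈ S \ Γ i, (A j)ᶜ)) := by
          rw [mul_assoc]; gcongr; exact hx₀ i
      _ ≤ x i * μ.real (⋂ j ∈ S, (A j)ᶜ) := mul_le_mul_of_nonneg_left avoid_near (hx₀ i)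

theorem prod_one_sub_mul_le_measureReal_biInter_compl (h : LopsidedBound μ A Γ x)
    (hA : ∀ i, MeasurableSet (A i)) (hx₀ : ∀ i, 0 ≤ x i) (hx₁ : ∀ i, x i ≤ 1) (S : Finset ι) :
    (∏ i ∈ S, (1 - x i)) * μ.real Set.univ ≤ μ.real (⋂ i ∈ S, (A i)ᶜ) := by
  classical
  simpa using prod_one_sub_mul_measureReal_biInter_compl_le (S := ∅) (fun i _ ↦ hA i)
    (fun i _ ↦ hx₁ i) fun U _ i _ hi ↦ by
      simpa using h.measureReal_inter_biInter_compl_le hA hx₀ hx₁ U hi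

end LopsidedBound

lemma le_one_sub_exp_mul_exp {a b : ℝ} (ha : 0 ≤ a) (hab : Real.exp 1 * (a + b) ≤ 1) :
    a ≤ (1 - Real.exp (-(Real.exp 1 * a))) * Real.exp (-(Real.exp 1 * b)) := by
  set e := Real.exp 1 with he
  have he₀ : 0 < e := Real.exp_pos 1
  have hea : e * a ≤ Real.exp (e * a) - 1 := by linarith [Real.add_one_le_exp (e * a)]
  calc a = e * a * Real.exp (-1) := by rw [Real.exp_neg, ← he]; field_simp
    _ ≤ (Real.exp (e * a) - 1) * Real.exp (-(e * (a + b))) :=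
      mul_le_mul hea (Real.exp_le_exp.2 (neg_le_neg hab)) (Real.exp_nonneg _)
        ((mul_nonneg he₀.le ha).trans hea)
    _ = (1 - Real.exp (-(e * a))) * Real.exp (-(e * b)) := by
      rw [mul_add, neg_add, Real.exp_add, Real.exp_neg (e * a)]
      field_simp

theorem exp_neg_sum_le_measureReal_biInter_compl [IsProbabilityMeasure μ] {Γ : ι → Finset ι}
    (hA : ∀ i, MeasurableSet (A i))
    (hindep : ∀ i S, i ∉ S → Disjoint S (Γ i) → IndepSet (A i) (⋂ j ∈ S, (A j)ᶜ) μ)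
    (hsum : ∀ i, Real.exp 1 * (μ.real (A i) + ∑ j ∈ Γ i, μ.real (A j)) ≤ 1) (S : Finset ι) :
    Real.exp (-(Real.exp 1 * ∑ i ∈ S, μ.real (A i))) ≤ μ.real (⋂ i ∈ S, (A i)ᶜ) := by
  set x : ι → ℝ := fun i ↦ 1 - Real.exp (-(Real.exp 1 * μ.real (A i))) with hx
  have prod_eq (T : Finset ι) :
      ∏ i ∈ T, (1 - x i) = Real.exp (-(Real.exp 1 * ∑ i ∈ T, μ.real (A i))) := by
    simp only [hx, sub_sub_cancel, Finset.mul_sum, ← Finset.sum_neg_distrib, Real.exp_sum]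
  have hbound : LopsidedBound μ A Γ x := fun i T hi hT ↦ by
    rw [measureReal_def, (hindep i T hi hT).measure_inter_eq_mul, ENNReal.toReal_mul, prod_eq]
    exact mul_le_mul_of_nonneg_right (le_one_sub_exp_mul_exp measureReal_nonneg (hsum i))
      measureReal_nonneg
  have hx₀ (i) : 0 ≤ x i :=
    sub_nonneg.2 <| Real.exp_le_one_iff.2 <| neg_nonpos.2 <| by positivity
  have hx₁ (i) : x i ≤ 1 := sub_le_self 1 (Real.exp_nonneg _)
  simpa [prod_eq] using hbound.prod_one_sub_mul_le_measureReal_biInter_compl hA hx₀ hx₁ S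

lemma indepSet_biInter_compl_of_iIndep {V : Type*} {m : V → MeasurableSpace Ω}
    (hm : ∀ v, m v ≤ mΩ) (hindep : iIndep m μ) {vbl : ι → Set V}
    (hA : ∀ i, MeasurableSet[⨆ v ∈ vbl i, m v] (A i)) {i : ι} {S : Finset ι}
    (hS : ∀ j ∈ S, Disjoint (vbl i) (vbl j)) :
    IndepSet (A i) (⋂ j ∈ S, (A j)ᶜ) μ := by
  have hdisj : Disjoint (vbl i) (⋃ j ∈ S, vbl j) := by
    simpa only [Set.disjoint_iUnion_right] using hS
  have hle {j} (hj : j ∈ S) : ⨆ v ∈ vbl j, m v ≤ ⨆ v ∈ ⋃ j ∈ S, vbl j, m v :=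
    biSup_mono (Set.subset_biUnion_of_mem (u := vbl) hj)
  exact (indep_iSup_of_disjoint hm hindep hdisj).indepSet_of_measurableSet (hA i) <|
    S.measurableSet_biInter fun j hj ↦ (hle hj _ (hA j)).compl

end Events

section Clauses

variable {V : Type*}

/-- The uniform random assignment of truth values to the variables in `V`: independent fair coins,
one for each variable. -/
noncomputable def uniformAssignment (V : Type*) : Measure (V → Bool) :=
  Measure.infinitePi fun _ ↦ uniformOn Set.univ

instance : IsProbabilityMeasure (uniformAssignment V) := by
  unfold uniformAssignment; infer_instance

/-- The event that an assignment violates the clause `C`, i.e. makes all its literals false; the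
literal `(v, b)` is true when `v` is assigned the value `b`. -/
def violating (C : Finset (V × Bool)) : Set (V → Bool) :=
  {α | ∀ p ∈ C, α p.1 ≠ p.2}

lemma iIndep_comap_eval_uniformAssignment :
    iIndep (fun v : V ↦ MeasurableSpace.comap (Function.eval v) inferInstance)
      (uniformAssignment V) :=
  (iIndepFun_iff_iIndep _ _ _).1 <| iIndepFun_infinitePi fun _ ↦ measurable_id

lemma measurableSet_iSup_comap_eval_violating [DecidableEq V] (C : Finset (V × Bool)) :
    MeasurableSet[⨆ v ∈ (C.image Prod.fst : Set V),
      MeasurableSpace.comap (Function.eval v) inferInstance] (violating C) := by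
  have : violating C = ⋂ p ∈ C, Function.eval p.1 ⁻¹' ({p.2}ᶜ : Set Bool) := by
    ext; simp only [violating, Set.mem_ofPred_eq, Set.mem_iInter]; rfl
  rw [this]
  refine C.measurableSet_biInter fun p hp ↦ ?_
  exact le_biSup (fun v : V ↦ MeasurableSpace.comap (Function.eval v) inferInstance)
    (Finset.mem_coe.2 (Finset.mem_image_of_mem Prod.fst hp)) _ ⟨{p.2}ᶜ, trivial, rfl⟩

lemma measurableSet_violating (C : Finset (V × Bool)) : MeasurableSet (violating C) := by
  classical
  exact iSup₂_le (fun v _ ↦ (measurable_pi_apply v).comap_le) _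
    (measurableSet_iSup_comap_eval_violating C)

lemma indepSet_violating_biInter_compl [DecidableEq V] {ι : Type*} {C : ι → Finset (V × Bool)}
    {i : ι} {S : Finset ι}
    (hS : ∀ j ∈ S, Disjoint ((C i).image Prod.fst) ((C j).image Prod.fst)) :
    IndepSet (violating (C i)) (⋂ j ∈ S, (violating (C j))ᶜ) (uniformAssignment V) :=
  indepSet_biInter_compl_of_iIndep (fun v ↦ (measurable_pi_apply v).comap_le)
    iIndep_comap_eval_uniformAssignment
    (fun j ↦ measurableSet_iSup_comap_eval_violating (C j))
    fun j hj ↦ Finset.disjoint_coe.2 (hS j hj)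

lemma violating_eq_pi [DecidableEq V] (C : Finset (V × Bool)) :
    violating C = Set.pi (C.image Prod.fst) fun v ↦ {b | (v, b) ∉ C} := by
  ext α
  simp only [violating, Set.mem_ofPred_eq, Set.mem_pi, Finset.mem_coe, Finset.mem_image]
  constructor
  · rintro h v - hv
    exact h _ hv rfl
  · rintro h p hp hpα
    exact h p.1 ⟨p, hp, rfl⟩ (by rwa [hpα])

lemma uniformOn_univ_bool_singleton (b : Bool) : uniformOn Set.univ {b} = 2⁻¹ := by
  simp only [uniformOn_univ, Measure.count_singleton, Fintype.card_bool, Nat.cast_ofNat, one_div]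

lemma measureReal_violating {C : Finset (V × Bool)} (hC : Set.InjOn Prod.fst (C : Set (V × Bool))) :
    (uniformAssignment V).real (violating C) = 2⁻¹ ^ C.card := by
  classical
  have other_value {p : V × Bool} (hp : p ∈ C) : {b | (p.1, b) ∉ C} = {!p.2} := by
    ext b
    suffices (p.1, b) ∈ C ↔ b = p.2 by simp [this, Bool.eq_not]
    exact ⟨fun hb ↦ congrArg Prod.snd (hC hb hp rfl), fun hb ↦ hb ▸ hp⟩
  rw [measureReal_def, violating_eq_pi, uniformAssignment,
    Measure.infinitePi_pi _ fun _ _ ↦ .of_discrete, Finset.prod_image hC,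
    Finset.prod_congr rfl fun p hp ↦ by rw [other_value hp, uniformOn_univ_bool_singleton]]
  simp

theorem exists_satisfying_of_sum_le [DecidableEq V] {ι : Type*} [Fintype ι]
    {C : ι → Finset (V × Bool)} (hne : ∀ i, (C i).Nonempty)
    (hC : ∀ i, Set.InjOn Prod.fst (C i : Set (V × Bool)))
    (hsum : ∀ i, Real.exp 1 * ∑ j with ¬Disjoint ((C i).image Prod.fst) ((C j).image Prod.fst),
      (2⁻¹ : ℝ) ^ (C j).card ≤ 1) :
    ∃ α : V → Bool, ∀ i, ∃ p ∈ C i, α p.1 = p.2 := by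
  classical
  let N (i : ι) : Finset ι := {j | ¬Disjoint ((C i).image Prod.fst) ((C j).image Prod.fst)}
  have self_mem (i) : i ∈ N i := by simpa [N] using (hne i).ne_empty
  have disjoint_of_notMem {i j} (h : j ∉ N i) :
      Disjoint ((C i).image Prod.fst) ((C j).image Prod.fst) := by simpa [N] using h
  have hindep (i) (S : Finset ι) (hi : i ∉ S) (hS : Disjoint S ((N i).erase i)) :
      IndepSet (violating (C i)) (⋂ j ∈ S, (violating (C j))ᶜ) (uniformAssignment V) :=
    indepSet_violating_biInter_compl fun j hj ↦ disjoint_of_notMem fun hjN ↦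
      Finset.disjoint_left.1 hS hj (Finset.mem_erase.2 ⟨ne_of_mem_of_not_mem hj hi, hjN⟩)
  have hprob (i) : Real.exp 1 * ((uniformAssignment V).real (violating (C i)) +
      ∑ j ∈ (N i).erase i, (uniformAssignment V).real (violating (C j))) ≤ 1 := by
    simp only [measureReal_violating (hC _)]
    rw [Finset.add_sum_erase _ (fun j ↦ (2⁻¹ : ℝ) ^ (C j).card) (self_mem i)]
    exact hsum i
  have hpos := (Real.exp_pos _).trans_le <| exp_neg_sum_le_measureReal_biInter_compl
    (fun i ↦ measurableSet_violating (C i)) hindep hprob Finset.univ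
  obtain ⟨α, hα⟩ := nonempty_of_measureReal_ne_zero hpos.ne'
  refine ⟨α, fun i ↦ ?_⟩
  have : α ∉ violating (C i) := Set.mem_iInter₂.1 hα i (Finset.mem_univ i)
  simpa only [violating, Set.mem_ofPred_eq, not_forall, not_not, exists_prop] using this

theorem exists_satisfying_of_card_filter_not_disjoint_le [DecidableEq V] {k : ℕ} (hk : 0 < k)
    {F : Finset (Finset (V × Bool))} (hcard : ∀ C ∈ F, C.card = k)
    (hF : ∀ C ∈ F, Set.InjOn Prod.fst (C : Set (V × Bool)))
    (hmeet : ∀ C ∈ F, Real.exp 1 *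
      (F.filter fun D ↦ ¬Disjoint (C.image Prod.fst) (D.image Prod.fst)).card ≤ 2 ^ k) :
    ∃ α : V → Bool, ∀ C ∈ F, ∃ p ∈ C, α p.1 = p.2 := by
  obtain ⟨α, hα⟩ := exists_satisfying_of_sum_le (C := fun C : F ↦ C.1)
    (fun C ↦ Finset.card_pos.1 (hk.trans_eq (hcard C C.2).symm)) (fun C ↦ hF C C.2) fun C ↦ by
      calc Real.exp 1 * ∑ D : F with ¬Disjoint (C.1.image Prod.fst) (D.1.image Prod.fst),
            (2⁻¹ : ℝ) ^ D.1.card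
          = Real.exp 1 * ∑ D ∈ F with ¬Disjoint (C.1.image Prod.fst) (D.image Prod.fst),
            (2⁻¹ : ℝ) ^ D.card := by
            rw [Finset.sum_filter, Finset.sum_filter, ← Finset.sum_coe_sort F]
        _ = Real.exp 1 *
            (F.filter fun D ↦ ¬Disjoint (C.1.image Prod.fst) (D.image Prod.fst)).card / 2 ^ k := by
            rw [Finset.sum_congr rfl fun D hD ↦ by rw [hcard D (Finset.mem_filter.1 hD).1],
              Finset.sum_const, nsmul_eq_mul, inv_pow, ← mul_assoc, div_eq_mul_inv]
        _ ≤ 1 := div_le_one_of_le₀ (hmeet C C.2) (by positivity)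
  exact ⟨α, fun C hC ↦ hα ⟨C, hC⟩⟩

end Clauses

lemma card_filter_not_disjoint_le_sum {V β : Type*} [DecidableEq V] (F : Finset β)
    (s : Finset V) (vbl : β → Finset V) :
    (F.filter fun D ↦ ¬Disjoint s (vbl D)).card ≤ ∑ v ∈ s, (F.filter fun D ↦ v ∈ vbl D).card := by
  classical
  refine (Finset.card_le_card fun D hD ↦ ?_).trans Finset.card_biUnion_le
  obtain ⟨hDF, hDs⟩ := Finset.mem_filter.1 hD
  obtain ⟨v, hvs, hvD⟩ := Finset.not_disjoint_iff.1 hDs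
  exact Finset.mem_biUnion.2 ⟨v, hvs, Finset.mem_filter.2 ⟨hDF, hvD⟩⟩

end LocalLemma

/-- If every variable of a k-CNF formula occurs in at most 2^k/(e·k) clauses,
the formula is satisfiable.  A clause is a set of k literals (variable, polarity)
over k distinct variables; a literal (x,b) is true under α iff α x = b. -/
theorem stmt6 {V : Type*} [DecidableEq V] (k : ℕ) (hk : 1 ≤ k)
    (F : Finset (Finset (V × Bool)))
    (hcard : ∀ C ∈ F, C.card = k ∧ (C.image Prod.fst).card = k)
    (hdeg : ∀ x : V, ((F.filter (fun C => x ∈ C.image Prod.fst)).card : ℝ)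
      ≤ (2 : ℝ) ^ k / (Real.exp 1 * k)) :
    ∃ α : V → Bool, ∀ C ∈ F, ∃ p ∈ C, α p.1 = p.2 := by
  refine LocalLemma.exists_satisfying_of_card_filter_not_disjoint_le hk
    (fun C hC ↦ (hcard C hC).1)
    (fun C hC ↦ Finset.card_image_iff.1 ((hcard C hC).2.trans (hcard C hC).1.symm)) fun C hC ↦ ?_
  rw [← le_div_iff₀' (Real.exp_pos 1)]
  calc ((F.filter fun D ↦ ¬Disjoint (C.image Prod.fst) (D.image Prod.fst)).card : ℝ)
      ≤ ∑ v ∈ C.image Prod.fst, ((F.filter fun D ↦ v ∈ D.image Prod.fst).card : ℝ) :=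
        mod_cast LocalLemma.card_filter_not_disjoint_le_sum F _ _
    _ ≤ (C.image Prod.fst).card • ((2 : ℝ) ^ k / (Real.exp 1 * k)) :=
        Finset.sum_le_card_nsmul _ _ _ fun v _ ↦ hdeg v
    _ = 2 ^ k / Real.exp 1 := by
        rw [(hcard C hC).2, nsmul_eq_mul]
        field_simp
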